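/- There exist at least two pairwise inequivalent near-extremal ternary self-dual codes of length 36 with exactly 104 codewords of Hamming weight 9, and at least seven pairwise inequivalent near-extremal ternary self-dual codes of length 36 with exactly 120 codewords of Hamming weight 9. -/

import Mathlib

/-- `C` is a self-dual ternary code of length 36: it coincides with its orthogonal
complement with respect to the standard dot product on `(ZMod 3)^36`. -/
def IsSelfDualCode (C : Submodule (ZMod 3) (Fin 36 → ZMod 3)) : Prop :=
  ∀ x : Fin 36 → ZMod 3, x ∈ C ↔ ∀ y ∈ C, ∑ i, x i * y i = 0

/-- The minimum (Hamming) weight of `C` is 9, i.e. `C` is near-extremal. -/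
def MinWeightNine (C : Submodule (ZMod 3) (Fin 36 → ZMod 3)) : Prop :=
  IsLeast {w : ℕ | ∃ x ∈ C, x ≠ 0 ∧ hammingNorm x = w} 9

/-- The number of codewords of `C` of Hamming weight exactly 9. -/
noncomputable def A9 (C : Submodule (ZMod 3) (Fin 36 → ZMod 3)) : ℕ :=
  Nat.card {x : Fin 36 → ZMod 3 // x ∈ C ∧ hammingNorm x = 9}

/-- Two ternary codes of length 36 are equivalent if some monomial transformation
(a permutation of coordinates combined with sign changes) maps one onto the other. -/
def CodeEquiv (C C' : Submodule (ZMod 3) (Fin 36 → ZMod 3)) : Prop :=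
  ∃ σ : Equiv.Perm (Fin 36), ∃ ε : Fin 36 → ZMod 3,
    (∀ i, ε i = 1 ∨ ε i = -1) ∧
    ∀ y : Fin 36 → ZMod 3, y ∈ C' ↔ ∃ x ∈ C, y = fun i => ε i * x (σ i)

/-!
A ternary code with generator matrix `[I | A]` is self-dual if `A * Aᵀ = -1`, and then
`[-Aᵀ | I]` generates it as well. A codeword of weight at most `9` has weight at most `4` on one of
the two halves of the coordinates, so it is a combination of at most four rows of one of the two
matrices, and all such words can be listed. For nine matrices `A` consisting of negacirculant
blocks, the lists show that the minimum weight is `9` and give the number of words of weight `9`.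
The number of ordered pairs of these words with disjoint supports, which is invariant under
monomial transformations, tells the codes apart.
-/

open Matrix

section Equivalence

variable {ι R : Type*} [Fintype ι] [CommRing R] [DecidableEq R]

/-- The codewords of Hamming weight `w`. -/
def wordsOfWeight (C : Submodule R (ι → R)) (w : ℕ) : Set (ι → R) :=
  {x | x ∈ C ∧ hammingNorm x = w}

/-- The ordered pairs of codewords of weight `w` with disjoint supports. Their number is an
invariant of monomial equivalence. Over a domain, disjointness of the supports means that the
coordinatewise product vanishes. -/
def disjointPairs (C : Submodule R (ι → R)) (w : ℕ) : Set ((ι → R) × (ι → R)) :=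
  {p | p.1 ∈ wordsOfWeight C w ∧ p.2 ∈ wordsOfWeight C w ∧ p.1 * p.2 = 0}

/-- The monomial transformation with permutation `σ` and coefficients `ε`. -/
def monomialMap (σ : Equiv.Perm ι) (ε x : ι → R) : ι → R :=
  fun i => ε i * x (σ i)

variable [NoZeroDivisors R] {σ : Equiv.Perm ι} {ε : ι → R}

omit [Fintype ι] [DecidableEq R] in
theorem monomialMap_injective (hε : ∀ i, ε i ≠ 0) : Function.Injective (monomialMap σ ε) := by
  intro x y hxy
  funext i
  have hi : ε (σ.symm i) * x i = ε (σ.symm i) * y i := by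
    simpa [monomialMap] using congrFun hxy (σ.symm i)
  exact mul_left_cancel₀ (hε _) hi

theorem hammingNorm_monomialMap (hε : ∀ i, ε i ≠ 0) (x : ι → R) :
    hammingNorm (monomialMap σ ε x) = hammingNorm x :=
  Finset.card_equiv σ fun i => by simp [monomialMap, hε i]

omit [Fintype ι] [DecidableEq R] in
theorem monomialMap_mul_monomialMap_eq_zero_iff (hε : ∀ i, ε i ≠ 0) {x y : ι → R} :
    monomialMap σ ε x * monomialMap σ ε y = 0 ↔ x * y = 0 := by
  simp only [funext_iff, Pi.mul_apply, Pi.zero_apply, monomialMap, mul_eq_zero, hε, false_or]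
  exact σ.forall_congr_right (q := fun i => x i = 0 ∨ y i = 0)

theorem wordsOfWeight_eq_image {C C' : Submodule R (ι → R)} (hε : ∀ i, ε i ≠ 0)
    (h : monomialMap σ ε '' C = C') (w : ℕ) :
    wordsOfWeight C' w = monomialMap σ ε '' wordsOfWeight C w := by
  ext y
  simp only [wordsOfWeight, Set.mem_ofPred_eq, ← SetLike.mem_coe, ← h, Set.mem_image]
  constructor
  · rintro ⟨⟨x, hx, rfl⟩, hw⟩
    exact ⟨x, ⟨hx, by rwa [hammingNorm_monomialMap hε] at hw⟩, rfl⟩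
  · rintro ⟨x, ⟨hx, hw⟩, rfl⟩
    exact ⟨⟨x, hx, rfl⟩, by rwa [hammingNorm_monomialMap hε]⟩

theorem ncard_disjointPairs_eq {C C' : Submodule R (ι → R)} (hε : ∀ i, ε i ≠ 0)
    (h : monomialMap σ ε '' C = C') (w : ℕ) :
    (disjointPairs C' w).ncard = (disjointPairs C w).ncard := by
  have image_eq : disjointPairs C' w =
      Prod.map (monomialMap σ ε) (monomialMap σ ε) '' disjointPairs C w := by
    ext ⟨x', y'⟩
    simp only [disjointPairs, wordsOfWeight_eq_image hε h, Set.mem_ofPred_eq, Set.mem_image,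
      Prod.exists, Prod.map_apply, Prod.mk.injEq]
    constructor
    · rintro ⟨⟨x, hx, rfl⟩, ⟨y, hy, rfl⟩, hxy⟩
      exact ⟨x, y, ⟨hx, hy, (monomialMap_mul_monomialMap_eq_zero_iff hε).1 hxy⟩, rfl, rfl⟩
    · rintro ⟨x, y, ⟨hx, hy, hxy⟩, rfl, rfl⟩
      exact ⟨⟨x, hx, rfl⟩, ⟨y, hy, rfl⟩, (monomialMap_mul_monomialMap_eq_zero_iff hε).2 hxy⟩
  rw [image_eq, Set.ncard_image_of_injective _
    ((monomialMap_injective hε).prodMap (monomialMap_injective hε))]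

end Equivalence

theorem CodeEquiv.ncard_disjointPairs_eq {C C' : Submodule (ZMod 3) (Fin 36 → ZMod 3)}
    (h : CodeEquiv C C') (w : ℕ) : (disjointPairs C' w).ncard = (disjointPairs C w).ncard := by
  obtain ⟨σ, ε, hε, hC⟩ := h
  have ε_ne_zero (i) : ε i ≠ 0 := by rcases hε i with h | h <;> rw [h] <;> decide
  refine _root_.ncard_disjointPairs_eq (σ := σ) ε_ne_zero (Set.ext fun y => ?_) w
  rw [Set.mem_image, SetLike.mem_coe, hC]
  simp only [SetLike.mem_coe, eq_comm (b := y)]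
  rfl

section Vectors

variable {R : Type*} {k m : ℕ}

theorem append_eq_append_iff {a c : Fin k → R} {b d : Fin m → R} :
    Fin.append a b = Fin.append c d ↔ a = c ∧ b = d :=
  (Fin.appendEquiv k m).injective.eq_iff (a := (a, b)) (b := (c, d)) |>.trans Prod.mk_inj

theorem append_dotProduct_append [NonUnitalNonAssocSemiring R] (a c : Fin k → R)
    (b d : Fin m → R) : Fin.append a b ⬝ᵥ Fin.append c d = a ⬝ᵥ c + b ⬝ᵥ d := by
  simp [dotProduct, Fin.sum_univ_add]

theorem hammingNorm_append [Zero R] [DecidableEq R] (a : Fin k → R) (b : Fin m → R) :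
    hammingNorm (Fin.append a b) = hammingNorm a + hammingNorm b := by
  simp [hammingNorm, Finset.card_filter, Fin.sum_univ_add]

theorem hammingNorm_cons [Zero R] [DecidableEq R] (c : R) (u : Fin m → R) :
    hammingNorm (Fin.cons c u : Fin (m + 1) → R) = (if c ≠ 0 then 1 else 0) + hammingNorm u := by
  simp [hammingNorm, Finset.card_filter, Fin.sum_univ_succ]

theorem hammingNorm_neg {ι : Type*} [Fintype ι] [AddGroup R] [DecidableEq R] (x : ι → R) :
    hammingNorm (-x) = hammingNorm x :=
  hammingNorm_comp (fun _ => Neg.neg) (fun _ => neg_injective) fun _ => neg_zero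

theorem dotProduct_self_eq_hammingNorm {ι : Type*} [Fintype ι] (x : ι → ZMod 3) :
    x ⬝ᵥ x = (hammingNorm x : ZMod 3) := by
  have mul_self_eq (a : ZMod 3) : a * a = if a ≠ 0 then 1 else 0 := by decide +revert
  simp only [dotProduct, mul_self_eq, Finset.sum_boole, hammingNorm]

end Vectors

section SystematicCode

variable {R : Type*} [CommRing R] {k m n : ℕ}

/-- The generator matrix `[I | A]`. -/
def generatorMatrix (A : Matrix (Fin k) (Fin m) R) : Matrix (Fin k) (Fin (k + m)) R :=
  of fun i => Fin.append (Pi.single i 1) (A i)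

/-- The parity-check matrix `[-Aᵀ | I]` of the code generated by `[I | A]`. -/
def parityCheckMatrix (A : Matrix (Fin k) (Fin m) R) : Matrix (Fin m) (Fin (k + m)) R :=
  of fun j => Fin.append (-(Aᵀ j)) (Pi.single j 1)

/-- The systematic code generated by the rows of `[I | A]`. -/
def systematicCode (A : Matrix (Fin k) (Fin m) R) : Submodule R (Fin (k + m) → R) :=
  LinearMap.range (generatorMatrix A).vecMulLinear

variable {A : Matrix (Fin k) (Fin m) R}

theorem mem_systematicCode {x : Fin (k + m) → R} :
    x ∈ systematicCode A ↔ ∃ u, u ᵥ* generatorMatrix A = x :=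
  Iff.rfl

theorem vecMul_generatorMatrix (u : Fin k → R) :
    u ᵥ* generatorMatrix A = Fin.append u (u ᵥ* A) := by
  ext j
  refine Fin.addCases (fun j => ?_) (fun j => ?_) j
  · simp [generatorMatrix, vecMul, dotProduct, Pi.single_apply]
  · simp [generatorMatrix, vecMul, dotProduct]

theorem vecMul_parityCheckMatrix (v : Fin m → R) :
    v ᵥ* parityCheckMatrix A = Fin.append (-(v ᵥ* Aᵀ)) v := by
  ext j
  refine Fin.addCases (fun j => ?_) (fun j => ?_) j
  · simp [parityCheckMatrix, vecMul, dotProduct]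
  · simp [parityCheckMatrix, vecMul, dotProduct, Pi.single_apply]

theorem generatorMatrix_mul_transpose :
    generatorMatrix A * (generatorMatrix A)ᵀ = 1 + A * Aᵀ := by
  ext i j
  change Fin.append (Pi.single i 1) (A i) ⬝ᵥ Fin.append (Pi.single j 1) (A j) = _
  rw [append_dotProduct_append]
  simp [mul_apply, dotProduct, one_apply, Pi.single_apply, eq_comm]

theorem forall_mem_systematicCode_dotProduct_eq_zero_iff {x : Fin (k + m) → R} :
    (∀ y ∈ systematicCode A, x ⬝ᵥ y = 0) ↔ ∃ v, v ᵥ* parityCheckMatrix A = x := by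
  obtain ⟨a, b, rfl⟩ : ∃ a b, Fin.append a b = x := ⟨_, _, Fin.append_castAdd_natAdd⟩
  have dotProduct_eq (u : Fin k → R) :
      Fin.append a b ⬝ᵥ u ᵥ* generatorMatrix A = (a + b ᵥ* Aᵀ) ⬝ᵥ u := by
    rw [vecMul_generatorMatrix, append_dotProduct_append, add_dotProduct, vecMul_transpose,
      dotProduct_comm b, ← dotProduct_mulVec, dotProduct_comm u]
  calc (∀ y ∈ systematicCode A, Fin.append a b ⬝ᵥ y = 0)
      ↔ ∀ u, (a + b ᵥ* Aᵀ) ⬝ᵥ u = 0 := by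
        simp only [mem_systematicCode, forall_exists_index, forall_apply_eq_imp_iff, dotProduct_eq]
    _ ↔ a = -(b ᵥ* Aᵀ) := by rw [dotProduct_eq_zero_iff, add_eq_zero_iff_eq_neg]
    _ ↔ ∃ v, Fin.append (-(v ᵥ* Aᵀ)) v = Fin.append a b := by
        constructor
        · rintro rfl
          exact ⟨b, rfl⟩
        · rintro ⟨v, hv⟩
          obtain ⟨ha, rfl⟩ := append_eq_append_iff.1 hv
          exact ha.symm
    _ ↔ ∃ v, v ᵥ* parityCheckMatrix A = Fin.append a b := by simp only [vecMul_parityCheckMatrix]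

theorem mem_systematicCode_iff_exists_vecMul_parityCheckMatrix {A : Matrix (Fin n) (Fin n) R}
    (hA : A * Aᵀ = -1) {x : Fin (n + n) → R} :
    x ∈ systematicCode A ↔ ∃ v, v ᵥ* parityCheckMatrix A = x := by
  have hA' : Aᵀ * A = -1 := by
    rw [← neg_eq_iff_eq_neg, ← neg_mul, mul_eq_one_comm, mul_neg, hA, neg_neg]
  simp only [mem_systematicCode, vecMul_generatorMatrix, vecMul_parityCheckMatrix]
  constructor
  · rintro ⟨u, rfl⟩
    exact ⟨u ᵥ* A, by rw [vecMul_vecMul, hA, vecMul_neg, vecMul_one, neg_neg]⟩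
  · rintro ⟨v, rfl⟩
    exact ⟨-(v ᵥ* Aᵀ), by rw [neg_vecMul, vecMul_vecMul, hA', vecMul_neg, vecMul_one, neg_neg]⟩

theorem mem_systematicCode_iff_forall_dotProduct_eq_zero {A : Matrix (Fin n) (Fin n) R}
    (hA : A * Aᵀ = -1) {x : Fin (n + n) → R} :
    x ∈ systematicCode A ↔ ∀ y ∈ systematicCode A, x ⬝ᵥ y = 0 := by
  rw [forall_mem_systematicCode_dotProduct_eq_zero_iff,
    mem_systematicCode_iff_exists_vecMul_parityCheckMatrix hA]

variable [DecidableEq R]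

/-- A light codeword is a combination of few rows of one of the two matrices because one of its
two halves is light. -/
theorem exists_vecMul_eq_of_hammingNorm_le {A : Matrix (Fin n) (Fin n) R} (hA : A * Aᵀ = -1)
    {x : Fin (n + n) → R} (hx : x ∈ systematicCode A) {k : ℕ} (hk : hammingNorm x ≤ 2 * k + 1) :
    (∃ u, hammingNorm u ≤ k ∧ u ᵥ* generatorMatrix A = x) ∨
      ∃ v, hammingNorm v ≤ k ∧ v ᵥ* parityCheckMatrix A = x := by
  obtain ⟨u, hu⟩ := mem_systematicCode.1 hx
  obtain ⟨v, hv⟩ := (mem_systematicCode_iff_exists_vecMul_parityCheckMatrix hA).1 hx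
  have halves_eq : Fin.append u (u ᵥ* A) = Fin.append (-(v ᵥ* Aᵀ)) v := by
    rw [← vecMul_generatorMatrix, hu, ← hv, vecMul_parityCheckMatrix]
  have norm_eq : hammingNorm x = hammingNorm u + hammingNorm v := by
    rw [← hu, vecMul_generatorMatrix, hammingNorm_append, (append_eq_append_iff.1 halves_eq).2]
  by_cases hu_le : hammingNorm u ≤ k
  · exact Or.inl ⟨u, hu_le, hu⟩
  · exact Or.inr ⟨v, by lia, hv⟩

end SystematicCode

section Mask

variable {n : ℕ}

/-- The natural number with bit `6 * i` set for every `i ∈ s`. The bits are spread out so that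
reduction modulo `63 = 2 ^ 6 - 1` counts them. -/
def mask (s : Finset (Fin n)) : ℕ :=
  ∑ i ∈ s, 2 ^ (6 * (i : ℕ))

theorem testBit_mask (s : Finset (Fin n)) (j : ℕ) :
    (mask s).testBit j ↔ ∃ i ∈ s, 6 * (i : ℕ) = j := by
  have mask_eq : mask s = ∑ j ∈ s.image fun i : Fin n => 6 * (i : ℕ), 2 ^ j :=
    (Finset.sum_image fun i _ i' _ h => by simpa [Fin.val_inj] using h).symm
  rw [← Nat.mem_bitIndices, ← List.mem_toFinset, mask_eq, Finset.toFinset_bitIndices_sum_two_pow,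
    Finset.mem_image]

theorem mem_iff_testBit_mask {s : Finset (Fin n)} {i : Fin n} :
    i ∈ s ↔ (mask s).testBit (6 * (i : ℕ)) := by
  simp [testBit_mask, Fin.val_inj]

theorem mask_injective : Function.Injective (mask (n := n)) := fun s t h =>
  Finset.ext fun i => by rw [mem_iff_testBit_mask, mem_iff_testBit_mask, h]

theorem mask_empty : mask (∅ : Finset (Fin n)) = 0 :=
  Finset.sum_empty

theorem lor_mask (s t : Finset (Fin n)) : mask s ||| mask t = mask (s ∪ t) := by
  refine Nat.eq_of_testBit_eq fun j => Bool.eq_iff_iff.2 ?_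
  simp only [Nat.testBit_lor, Bool.or_eq_true, testBit_mask, Finset.mem_union]
  grind

theorem land_mask (s t : Finset (Fin n)) : mask s &&& mask t = mask (s ∩ t) := by
  refine Nat.eq_of_testBit_eq fun j => Bool.eq_iff_iff.2 ?_
  simp only [Nat.testBit_land, Bool.and_eq_true, testBit_mask, Finset.mem_inter]
  grind

theorem xor_mask (s t : Finset (Fin n)) : mask s ^^^ mask t = mask (symmDiff s t) := by
  refine Nat.eq_of_testBit_eq fun j => Bool.eq_iff_iff.2 ?_
  rw [Nat.testBit_xor, Bool.xor_iff_ne, Ne, Bool.eq_iff_iff]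
  simp only [testBit_mask, Finset.mem_symmDiff]
  grind

theorem mask_mod_eq_card (hn : n < 63) (s : Finset (Fin n)) : mask s % 63 = s.card := by
  have pow_mod (i : ℕ) : 2 ^ (6 * i) % 63 = 1 := by rw [pow_mul, Nat.pow_mod]; simp
  have card_lt : s.card < 63 := s.card_le_univ.trans_lt (by simpa using hn)
  simp only [mask, Finset.sum_nat_mod _ 63, pow_mod, Finset.sum_const, smul_eq_mul, mul_one,
    Nat.mod_eq_of_lt card_lt]

end Mask

/-- A ternary word stored as the mask of its support and the mask of its negative entries. -/
structure PackedWord where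
  support : ℕ
  negatives : ℕ

-- The kernel evaluates the functions below on many inputs, hence the recursors instead of
-- structural recursion and the accelerated `Nat` functions instead of the overloaded notation.
namespace PackedWord

/-- The packed form of `x + y`. -/
def add (a b : PackedWord) : PackedWord :=
  ⟨Nat.xor (Nat.lor a.support b.support)
      (Nat.land (Nat.land a.support b.support) (Nat.xor a.negatives b.negatives)),
    Nat.xor (Nat.lor a.negatives b.negatives) (Nat.land a.support b.support)⟩

/-- The packed form of `-x`. -/
def neg (a : PackedWord) : PackedWord :=
  ⟨a.support, Nat.xor a.support a.negatives⟩

/-- The Hamming weight, for words of length less than `63`. -/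
def weight (a : PackedWord) : ℕ :=
  Nat.mod a.support 63

/-- The number of coordinates at which exactly one of the two words vanishes, for words of length
less than `63`. -/
def supportDist (a b : PackedWord) : ℕ :=
  Nat.mod (Nat.xor a.support b.support) 63

theorem weight_eq_zero_of_neg_eq {a : PackedWord} (h : a.neg = a) : a.weight = 0 := by
  have xor_eq : a.support ^^^ a.negatives = a.negatives := congrArg negatives h
  have support_eq : a.support = 0 := by simpa using congrArg (· ^^^ a.negatives) xor_eq
  rw [weight, support_eq]

section Pack

variable {n : ℕ}

/-- The word `x` in packed form. -/
def pack (x : Fin n → ZMod 3) : PackedWord :=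
  ⟨mask {i | x i ≠ 0}, mask {i | x i = -1}⟩

theorem pack_injective : Function.Injective (pack (n := n)) := by
  intro x y hxy
  simp only [pack, mk.injEq, mask_injective.eq_iff, Finset.ext_iff, Finset.mem_filter_univ] at hxy
  funext i
  have support_iff := hxy.1 i
  have negatives_iff := hxy.2 i
  generalize x i = a, y i = b at support_iff negatives_iff
  decide +revert +kernel

theorem pack_add (x y : Fin n → ZMod 3) : (pack x).add (pack y) = pack (x + y) := by
  change PackedWord.mk ((_ ||| _) ^^^ ((_ &&& _) &&& (_ ^^^ _))) ((_ ||| _) ^^^ (_ &&& _)) = _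
  simp only [pack, lor_mask, land_mask, xor_mask]
  congr 2 <;> ext i <;>
    simp only [Finset.mem_symmDiff, Finset.mem_union, Finset.mem_inter, Finset.mem_filter_univ,
      Pi.add_apply] <;>
    generalize x i = a, y i = b <;> decide +revert +kernel

theorem pack_neg (x : Fin n → ZMod 3) : (pack x).neg = pack (-x) := by
  change PackedWord.mk _ (_ ^^^ _) = _
  simp only [pack, xor_mask]
  congr 2 <;> ext i <;>
    simp only [Finset.mem_symmDiff, Finset.mem_filter_univ, Pi.neg_apply] <;>
    generalize x i = a <;> decide +revert +kernel

theorem land_support_pack_eq_zero_iff (x y : Fin n → ZMod 3) :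
    Nat.land (pack x).support (pack y).support = 0 ↔ x * y = 0 := by
  change (pack x).support &&& (pack y).support = 0 ↔ _
  rw [pack, pack, land_mask, ← mask_empty (n := n), mask_injective.eq_iff,
    Finset.eq_empty_iff_forall_notMem, funext_iff]
  simp only [Finset.mem_inter, Finset.mem_filter_univ, Pi.mul_apply, Pi.zero_apply, mul_eq_zero]
  grind

variable (hn : n < 63)
include hn

theorem weight_pack (x : Fin n → ZMod 3) : (pack x).weight = hammingNorm x := by
  change (pack x).support % 63 = _
  rw [pack, mask_mod_eq_card hn]
  rfl

theorem supportDist_pack_le (x y : Fin n → ZMod 3) :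
    (pack x).supportDist (pack y) ≤ hammingNorm (x + y) := by
  let S (z : Fin n → ZMod 3) : Finset (Fin n) := {i | z i ≠ 0}
  calc (pack x).supportDist (pack y)
      = mask (symmDiff (S x) (S y)) % 63 := congrArg (Nat.mod · 63) (xor_mask (S x) (S y))
    _ = (symmDiff (S x) (S y)).card := mask_mod_eq_card hn _
    _ ≤ hammingNorm (x + y) := Finset.card_le_card fun i => by
      simp only [S, Finset.mem_symmDiff, Finset.mem_filter_univ, Pi.add_apply]
      rintro (⟨hx, hy⟩ | ⟨hy, hx⟩) <;> simp_all

end Pack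

end PackedWord

section Search

namespace PackedWord

/-- `[a]` if `a` has weight at most `d`, and `[]` otherwise. -/
def ifLight (d : ℕ) (a : PackedWord) : List PackedWord :=
  Bool.rec [] [a] (Nat.ble a.weight d)

/-- The words of weight at most `d` among `a` and `a ± r` for `r` in `rs`. -/
def lightNeighbors (d : ℕ) (rs : List PackedWord) (a : PackedWord) : List PackedWord :=
  List.rec (ifLight d a)
    (fun r _ ih =>
      Bool.rec ih (ifLight d (a.add r) ++ (ifLight d (a.add r.neg) ++ ih))
        (Nat.ble (a.supportDist r) d))
    rs

/-- The words of weight at most `d` among the sums of `a` and at most `k + 1` signed members of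
`rs`. -/
def lightExtensions (d k : ℕ) : List PackedWord → PackedWord → List PackedWord :=
  Nat.rec (lightNeighbors d)
    (fun _ ihk rs =>
      List.rec (fun a => ifLight d a)
        (fun r rs ih a => ihk rs (a.add r) ++ (ihk rs (a.add r.neg) ++ ih a)) rs)
    k

/-- The words of weight at most `d` among the nonempty signed sums of at most `k + 2` members of
`rs` in which the first member occurs with sign `+`. -/
def lightCombinations (d k : ℕ) (rs : List PackedWord) : List PackedWord :=
  List.rec [] (fun r rs ih => lightExtensions d k rs r ++ ih) rs

end PackedWord

section SparseTranslates

variable {V : Type*} [AddCommGroup V] [Module (ZMod 3) V] {m : ℕ}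

/-- The vectors obtained from `a` by adding a linear combination of the `r i` with at most `k`
nonzero coefficients. -/
def sparseTranslates (k : ℕ) (r : Fin m → V) (a : V) : Set V :=
  {x | ∃ c : Fin m → ZMod 3, hammingNorm c ≤ k ∧ a + ∑ i, c i • r i = x}

theorem sparseTranslates_zero (r : Fin m → V) (a : V) : sparseTranslates 0 r a = {a} := by
  ext x
  simp [sparseTranslates, eq_comm (a := x)]

theorem sparseTranslates_fin_zero (k : ℕ) (r : Fin 0 → V) (a : V) :
    sparseTranslates k r a = {a} := by
  ext x
  simp [sparseTranslates, eq_comm, hammingNorm]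

theorem sum_cons_smul (c : ZMod 3) (u : Fin m → ZMod 3) (r : Fin (m + 1) → V) :
    ∑ i, (Fin.cons c u : Fin (m + 1) → ZMod 3) i • r i = c • r 0 + ∑ i, u i • Fin.tail r i := by
  simp [Fin.sum_univ_succ, Fin.tail]

theorem eq_one_or_eq_neg_one_or_eq_zero (c : ZMod 3) : c = 1 ∨ c = -1 ∨ c = 0 := by
  decide +revert

theorem exists_zmod_three {p : ZMod 3 → Prop} : (∃ c, p c) ↔ p 1 ∨ p (-1) ∨ p 0 := by
  constructor
  · rintro ⟨c, hc⟩
    obtain rfl | rfl | rfl := eq_one_or_eq_neg_one_or_eq_zero c <;> simp [hc]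
  · rintro (h | h | h) <;> exact ⟨_, h⟩

theorem sparseTranslates_succ (k : ℕ) (r : Fin (m + 1) → V) (a : V) :
    sparseTranslates (k + 1) r a =
      sparseTranslates k (Fin.tail r) (a + r 0) ∪ sparseTranslates k (Fin.tail r) (a - r 0) ∪
        sparseTranslates (k + 1) (Fin.tail r) a := by
  ext x
  simp only [sparseTranslates, Set.mem_ofPred_eq, Set.mem_union, Fin.exists_fin_succ_pi,
    hammingNorm_cons, sum_cons_smul, exists_zmod_three]
  simp [add_comm 1, ← add_assoc, sub_eq_add_neg, or_assoc]

end SparseTranslates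

namespace PackedWord

variable {n m : ℕ}

theorem ofFn_pack_succ (r : Fin (m + 1) → Fin n → ZMod 3) :
    (List.ofFn fun i => pack (r i)) = pack (r 0) :: List.ofFn fun i => pack (Fin.tail r i) :=
  List.ofFn_succ

variable (hn : n < 63) {d k : ℕ} {w : PackedWord}
include hn

theorem mem_ifLight {x : Fin n → ZMod 3} :
    w ∈ ifLight d (pack x) ↔ hammingNorm x ≤ d ∧ pack x = w := by
  rw [← weight_pack hn x, ifLight]
  cases h : Nat.ble (pack x).weight d
  · simp [← Nat.ble_eq, h]
  · simp [← Nat.ble_eq, h, eq_comm]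

theorem mem_lightNeighbors_cons {rs : List PackedWord} {r a : Fin n → ZMod 3} :
    w ∈ lightNeighbors d (pack r :: rs) (pack a) ↔
      w ∈ ifLight d (pack (a + r)) ∨ w ∈ ifLight d (pack (a - r)) ∨
        w ∈ lightNeighbors d rs (pack a) := by
  have unfold_cons : lightNeighbors d (pack r :: rs) (pack a) =
      Bool.rec (lightNeighbors d rs (pack a))
        (ifLight d (pack (a + r)) ++ (ifLight d (pack (a - r)) ++ lightNeighbors d rs (pack a)))
        (Nat.ble ((pack a).supportDist (pack r)) d) := by
    rw [sub_eq_add_neg, ← pack_add, ← pack_add, ← pack_neg]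
    rfl
  rw [unfold_cons]
  cases h : Nat.ble ((pack a).supportDist (pack r)) d
  · have dist_gt : d < (pack a).supportDist (pack r) := by
      rw [← not_le, ← Nat.ble_eq, h]
      exact Bool.false_ne_true
    have add_heavy : d < hammingNorm (a + r) := dist_gt.trans_le (supportDist_pack_le hn a r)
    have sub_heavy : d < hammingNorm (a - r) := by
      rw [sub_eq_add_neg]
      refine dist_gt.trans_le (le_of_eq_of_le ?_ (supportDist_pack_le hn a (-r)))
      rw [← pack_neg]
      rfl
    simp [mem_ifLight hn, add_heavy.not_ge, sub_heavy.not_ge]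
  · simp

theorem mem_lightNeighbors (r : Fin m → Fin n → ZMod 3) {a : Fin n → ZMod 3} :
    w ∈ lightNeighbors d (List.ofFn fun i => pack (r i)) (pack a) ↔
      ∃ x ∈ sparseTranslates 1 r a, hammingNorm x ≤ d ∧ pack x = w := by
  induction m with
  | zero =>
    simp only [sparseTranslates_fin_zero, Set.mem_singleton_iff, exists_eq_left]
    exact mem_ifLight hn
  | succ m ih =>
    simp only [ofFn_pack_succ, mem_lightNeighbors_cons hn, ih, sparseTranslates_succ,
      sparseTranslates_zero, mem_ifLight hn, Set.mem_union, Set.mem_singleton_iff, or_and_right,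
      exists_or, exists_eq_left, or_assoc]

theorem mem_lightExtensions (r : Fin m → Fin n → ZMod 3) {a : Fin n → ZMod 3} :
    w ∈ lightExtensions d k (List.ofFn fun i => pack (r i)) (pack a) ↔
      ∃ x ∈ sparseTranslates (k + 1) r a, hammingNorm x ≤ d ∧ pack x = w := by
  induction k generalizing m a with
  | zero => exact mem_lightNeighbors hn r
  | succ k ihk =>
    induction m generalizing a with
    | zero =>
      simp only [sparseTranslates_fin_zero, Set.mem_singleton_iff, exists_eq_left]
      exact mem_ifLight hn
    | succ m ihm =>
      have unfold_cons : lightExtensions d (k + 1) (List.ofFn fun i => pack (r i)) (pack a) =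
          lightExtensions d k (List.ofFn fun i => pack (Fin.tail r i)) (pack (a + r 0)) ++
            (lightExtensions d k (List.ofFn fun i => pack (Fin.tail r i)) (pack (a - r 0)) ++
              lightExtensions d (k + 1) (List.ofFn fun i => pack (Fin.tail r i)) (pack a)) := by
        rw [sub_eq_add_neg, ← pack_add, ← pack_add, ← pack_neg, ofFn_pack_succ]
        rfl
      simp only [unfold_cons, List.mem_append, ihk, ihm, sparseTranslates_succ (k + 1),
        Set.mem_union, or_and_right, exists_or, or_assoc]

theorem exists_of_mem_lightCombinations {r : Fin m → Fin n → ZMod 3}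
    (hw : w ∈ lightCombinations d k (List.ofFn fun i => pack (r i))) :
    ∃ c : Fin m → ZMod 3, pack (∑ i, c i • r i) = w := by
  induction m with
  | zero => simp [lightCombinations] at hw
  | succ m ih =>
    rw [ofFn_pack_succ] at hw
    rcases List.mem_append.1 hw with hw | hw
    · obtain ⟨_, ⟨c, -, rfl⟩, -, rfl⟩ := (mem_lightExtensions hn (Fin.tail r)).1 hw
      exact ⟨Fin.cons 1 c, by simp [sum_cons_smul]⟩
    · obtain ⟨c, rfl⟩ := ih (r := Fin.tail r) hw
      exact ⟨Fin.cons 0 c, by simp [sum_cons_smul]⟩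

theorem pack_mem_lightCombinations {r : Fin (m + 1) → Fin n → ZMod 3} {u : Fin m → ZMod 3}
    (hu : hammingNorm u ≤ k + 1) (hd : hammingNorm (r 0 + ∑ i, u i • Fin.tail r i) ≤ d) :
    pack (r 0 + ∑ i, u i • Fin.tail r i) ∈
      lightCombinations d k (List.ofFn fun i => pack (r i)) := by
  rw [ofFn_pack_succ]
  exact List.mem_append_left _
    ((mem_lightExtensions hn (Fin.tail r)).2 ⟨_, ⟨u, hu, rfl⟩, hd, rfl⟩)

theorem pack_mem_lightCombinations_or_neg {r : Fin m → Fin n → ZMod 3} {c : Fin m → ZMod 3}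
    (hc₀ : c ≠ 0) (hc : hammingNorm c ≤ k + 2) (hd : hammingNorm (∑ i, c i • r i) ≤ d) :
    pack (∑ i, c i • r i) ∈ lightCombinations d k (List.ofFn fun i => pack (r i)) ∨
      pack (-∑ i, c i • r i) ∈ lightCombinations d k (List.ofFn fun i => pack (r i)) := by
  induction m with
  | zero => exact absurd (Subsingleton.elim c 0) hc₀
  | succ m ih =>
    obtain ⟨a, u, rfl⟩ : ∃ a u, c = Fin.cons a u := ⟨_, _, (Fin.cons_self_tail c).symm⟩
    rw [hammingNorm_cons] at hc
    rw [sum_cons_smul] at hd ⊢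
    obtain rfl | rfl | rfl := eq_one_or_eq_neg_one_or_eq_zero a
    · rw [one_smul] at hd ⊢
      rw [if_pos one_ne_zero] at hc
      exact Or.inl (pack_mem_lightCombinations hn (by lia) hd)
    · have neg_sum_eq : -((-1 : ZMod 3) • r 0 + ∑ i, u i • Fin.tail r i) =
          r 0 + ∑ i, (-u) i • Fin.tail r i := by
        simp [add_comm]
      rw [if_pos (by decide)] at hc
      rw [← hammingNorm_neg, neg_sum_eq] at hd
      rw [neg_sum_eq]
      exact Or.inr (pack_mem_lightCombinations hn (by rw [hammingNorm_neg]; lia) hd)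
    · have hu₀ : u ≠ 0 := by
        rintro rfl
        exact hc₀ Matrix.cons_zero_zero
      rw [if_neg (by decide), zero_add] at hc
      rw [zero_smul, zero_add] at hd ⊢
      rw [ofFn_pack_succ]
      exact (ih hu₀ hc hd).imp (List.mem_append_right _) (List.mem_append_right _)

end PackedWord

end Search

section Certificate

theorem ncard_setOf_mem {α : Type*} {L : List α} (hL : L.Nodup) :
    {w | w ∈ L}.ncard = L.length := by
  classical
  rw [← List.coe_toFinset, Set.ncard_coe_finset, List.toFinset_card_of_nodup hL]

theorem mul_transpose_self_eq_zero_of_three_dvd {ι κ : Type*} [Fintype ι]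
    {M : Matrix κ ι (ZMod 3)} (h : ∀ i j, 3 ∣ hammingNorm (M i + M j)) : M * Mᵀ = 0 := by
  have norm_add_eq_zero (i j) : M i ⬝ᵥ M i + 2 * (M i ⬝ᵥ M j) + M j ⬝ᵥ M j = 0 := by
    have add_self := (dotProduct_self_eq_hammingNorm _).trans
      ((ZMod.natCast_eq_zero_iff _ 3).2 (h i j))
    rw [add_dotProduct, dotProduct_add, dotProduct_add, dotProduct_comm (M j) (M i)] at add_self
    linear_combination add_self
  have three_eq_zero : (3 : ZMod 3) = 0 := rfl
  have self_eq_zero (i) : M i ⬝ᵥ M i = 0 := by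
    linear_combination norm_add_eq_zero i i - (M i ⬝ᵥ M i) * three_eq_zero
  ext i j
  change M i ⬝ᵥ M j = 0
  linear_combination 2 * norm_add_eq_zero i j - 2 * self_eq_zero i - 2 * self_eq_zero j -
    (M i ⬝ᵥ M j) * three_eq_zero

namespace PackedWord

/-- The members of `L` and their negatives. -/
def signed (L : List PackedWord) : List PackedWord :=
  L ++ L.map neg

/-- The number of pairs of members of `L` with disjoint supports. -/
def disjointCount (L : List PackedWord) : ℕ :=
  (L ×ˢ L).countP fun p => Nat.land p.1.support p.2.support = 0

theorem disjointCount_signed (L : List PackedWord) :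
    disjointCount (signed L) = 4 * disjointCount L := by
  simp only [disjointCount, signed, SProd.sprod, List.product, List.countP_flatMap, List.map_append,
    List.countP_append, List.sum_append, List.map_map, List.countP_map, Function.comp_def, neg,
    List.sum_map_add]
  exact (fun x => by lia : ∀ x : ℕ, x + x + (x + x) = 4 * x) _

theorem nodup_signed {L : List PackedWord} (hL : ∀ w ∈ L, w.weight ≠ 0)
    (support_nodup : (L.map support).Nodup) : (signed L).Nodup := by
  refine List.nodup_append.2 ⟨support_nodup.of_map, ?_, ?_⟩
  · refine List.Nodup.of_map support ?_
    rwa [List.map_map]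
  · rintro _ neg_mem w mem rfl
    obtain ⟨a, ha, rfl⟩ := List.mem_map.1 mem
    exact hL a ha (weight_eq_zero_of_neg_eq (List.inj_on_of_nodup_map support_nodup neg_mem ha rfl))

end PackedWord

open PackedWord

variable {n : ℕ} {A : Matrix (Fin n) (Fin n) (ZMod 3)}

/-- The packed codewords of weight at most `9` of a self-dual code with generator matrix `[I | A]`,
up to sign. -/
def lightWords (A : Matrix (Fin n) (Fin n) (ZMod 3)) : List PackedWord :=
  lightCombinations 9 2 (List.ofFn fun i => pack (generatorMatrix A i)) ++
    lightCombinations 9 2 (List.ofFn fun i => pack (parityCheckMatrix A i))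

/-- The finite computation that establishes `N` words of weight `9` and `D` ordered
disjoint pairs among them for the self-dual code with generator matrix `[I | A]`. -/
structure Certificate (A : Matrix (Fin n) (Fin n) (ZMod 3)) (N D : ℕ) : Prop where
  three_dvd_weight :
    ∀ i j, 3 ∣ ((pack (generatorMatrix A i)).add (pack (generatorMatrix A j))).weight
  weight_eq_nine : ∀ w ∈ lightWords A, w.weight = 9
  support_nodup : ((lightWords A).map support).Nodup
  two_mul_length : 2 * (lightWords A).length = N
  four_mul_disjointCount : 4 * disjointCount (lightWords A) = D

instance (N D : ℕ) : Decidable (Certificate A N D) :=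
  decidable_of_iff (_ ∧ _ ∧ _ ∧ _ ∧ _)
    ⟨fun ⟨h₁, h₂, h₃, h₄, h₅⟩ => ⟨h₁, h₂, h₃, h₄, h₅⟩,
      fun ⟨h₁, h₂, h₃, h₄, h₅⟩ => ⟨h₁, h₂, h₃, h₄, h₅⟩⟩

variable {N D : ℕ} (hn : n + n < 63) (h : Certificate A N D)
include hn h

theorem Certificate.mul_transpose_eq : A * Aᵀ = -1 := by
  have dvd_norm (i j) : 3 ∣ hammingNorm (generatorMatrix A i + generatorMatrix A j) := by
    rw [← weight_pack hn, ← pack_add]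
    exact h.three_dvd_weight i j
  rw [← add_eq_zero_iff_eq_neg', ← generatorMatrix_mul_transpose]
  exact mul_transpose_self_eq_zero_of_three_dvd dvd_norm

theorem Certificate.exists_of_mem_lightWords {w : PackedWord} (hw : w ∈ lightWords A) :
    ∃ x ∈ wordsOfWeight (systematicCode A) 9, pack x = w := by
  have weight_eq := h.weight_eq_nine w hw
  obtain ⟨x, hx, rfl⟩ : ∃ x ∈ systematicCode A, pack x = w := by
    rcases List.mem_append.1 hw with hw | hw
    · obtain ⟨c, rfl⟩ := exists_of_mem_lightCombinations hn hw
      exact ⟨_, ⟨c, vecMul_eq_sum c _⟩, rfl⟩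
    · obtain ⟨c, rfl⟩ := exists_of_mem_lightCombinations hn hw
      exact ⟨_, (mem_systematicCode_iff_exists_vecMul_parityCheckMatrix (h.mul_transpose_eq hn)).2
        ⟨c, vecMul_eq_sum c _⟩, rfl⟩
  exact ⟨x, ⟨hx, by rwa [weight_pack hn] at weight_eq⟩, rfl⟩

theorem Certificate.pack_mem_lightWords_or_neg {x : Fin (n + n) → ZMod 3}
    (hx : x ∈ systematicCode A) (hx₀ : x ≠ 0) (hx₉ : hammingNorm x ≤ 9) :
    pack x ∈ lightWords A ∨ pack (-x) ∈ lightWords A := by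
  rcases exists_vecMul_eq_of_hammingNorm_le (h.mul_transpose_eq hn) hx (k := 4) hx₉ with
    ⟨u, hu, rfl⟩ | ⟨u, hu, rfl⟩
  all_goals
    have hu₀ : u ≠ 0 := by
      rintro rfl
      exact hx₀ (zero_vecMul _)
    rw [vecMul_eq_sum] at hx₉ ⊢
    have := pack_mem_lightCombinations_or_neg hn hu₀ hu hx₉
  · exact this.imp (List.mem_append_left _) (List.mem_append_left _)
  · exact this.imp (List.mem_append_right _) (List.mem_append_right _)

theorem Certificate.mem_signed_lightWords_iff {w : PackedWord} :
    w ∈ signed (lightWords A) ↔ ∃ x ∈ wordsOfWeight (systematicCode A) 9, pack x = w := by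
  constructor
  · intro hw
    rcases List.mem_append.1 hw with hw | hw
    · exact h.exists_of_mem_lightWords hn hw
    · obtain ⟨w', hw', rfl⟩ := List.mem_map.1 hw
      obtain ⟨x, ⟨hx, hx₉⟩, rfl⟩ := h.exists_of_mem_lightWords hn hw'
      exact ⟨-x, ⟨neg_mem hx, by rwa [hammingNorm_neg]⟩, (pack_neg x).symm⟩
  · rintro ⟨x, ⟨hx, hx₉⟩, rfl⟩
    have hx₀ : x ≠ 0 := by
      rw [← hammingNorm_ne_zero_iff, hx₉]
      exact Nat.succ_ne_zero 8
    rcases h.pack_mem_lightWords_or_neg hn hx hx₀ hx₉.le with mem | mem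
    · exact List.mem_append_left _ mem
    · exact List.mem_append_right _ (List.mem_map.2 ⟨_, mem, by rw [pack_neg, neg_neg]⟩)

theorem Certificate.hammingNorm_eq_nine {x : Fin (n + n) → ZMod 3}
    (hx : x ∈ systematicCode A) (hx₀ : x ≠ 0) (hx₉ : hammingNorm x ≤ 9) : hammingNorm x = 9 := by
  rcases h.pack_mem_lightWords_or_neg hn hx hx₀ hx₉ with mem | mem
  · rw [← weight_pack hn, h.weight_eq_nine _ mem]
  · rw [← hammingNorm_neg, ← weight_pack hn, h.weight_eq_nine _ mem]

omit hn in
theorem Certificate.nodup_signed_lightWords : (signed (lightWords A)).Nodup :=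
  nodup_signed (fun w hw => by simp [h.weight_eq_nine w hw]) h.support_nodup

theorem Certificate.ncard_wordsOfWeight : (wordsOfWeight (systematicCode A) 9).ncard = N := by
  have image_eq : pack '' wordsOfWeight (systematicCode A) 9 = {w | w ∈ signed (lightWords A)} :=
    Set.ext fun w => (h.mem_signed_lightWords_iff hn).symm
  rw [← Set.ncard_image_of_injective _ pack_injective, image_eq,
    ncard_setOf_mem h.nodup_signed_lightWords, ← h.two_mul_length, signed, List.length_append,
    List.length_map, two_mul]

theorem Certificate.ncard_disjointPairs : (disjointPairs (systematicCode A) 9).ncard = D := by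
  let P := signed (lightWords A)
  have image_eq : Prod.map pack pack '' disjointPairs (systematicCode A) 9 =
      {p | p ∈ (P ×ˢ P).filter fun p => Nat.land p.1.support p.2.support = 0} := by
    ext ⟨w, w'⟩
    simp only [disjointPairs, P, Set.mem_image, Set.mem_ofPred_eq, List.mem_filter,
      List.mem_product, h.mem_signed_lightWords_iff hn, Prod.exists, Prod.map_apply,
      Prod.mk.injEq, decide_eq_true_eq]
    constructor
    · rintro ⟨x, y, ⟨hx, hy, hxy⟩, rfl, rfl⟩
      exact ⟨⟨⟨x, hx, rfl⟩, ⟨y, hy, rfl⟩⟩, (land_support_pack_eq_zero_iff x y).2 hxy⟩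
    · rintro ⟨⟨⟨x, hx, rfl⟩, ⟨y, hy, rfl⟩⟩, hxy⟩
      exact ⟨x, y, ⟨hx, hy, (land_support_pack_eq_zero_iff x y).1 hxy⟩, rfl, rfl⟩
  have P_nodup : P.Nodup := h.nodup_signed_lightWords
  rw [← Set.ncard_image_of_injective _ (pack_injective.prodMap pack_injective), image_eq,
    ncard_setOf_mem ((P_nodup.product P_nodup).filter _), ← List.countP_eq_length_filter]
  exact (disjointCount_signed _).trans h.four_mul_disjointCount

end Certificate

section LengthThirtySix

variable {A : Matrix (Fin 18) (Fin 18) (ZMod 3)} {N D : ℕ} (h : Certificate A N D)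
include h

theorem Certificate.isSelfDualCode : IsSelfDualCode (systematicCode A) := fun _ =>
  mem_systematicCode_iff_forall_dotProduct_eq_zero (h.mul_transpose_eq (by norm_num))

theorem Certificate.minWeightNine (hN : N ≠ 0) : MinWeightNine (systematicCode A) := by
  have hn : 18 + 18 < 63 := by norm_num
  constructor
  · have ncard_ne_zero : (wordsOfWeight (systematicCode A) 9).ncard ≠ 0 := by
      rwa [h.ncard_wordsOfWeight hn]
    obtain ⟨x, hx, hx₉⟩ := Set.nonempty_of_ncard_ne_zero ncard_ne_zero
    exact ⟨x, hx, hammingNorm_ne_zero_iff.1 (hx₉.trans_ne (Nat.succ_ne_zero 8)), hx₉⟩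
  · rintro _ ⟨x, hx, hx₀, rfl⟩
    by_contra! light
    exact light.ne (h.hammingNorm_eq_nine hn hx hx₀ light.le)

theorem Certificate.nearExtremal (hN : N ≠ 0) :
    IsSelfDualCode (systematicCode A) ∧ MinWeightNine (systematicCode A) ∧
      A9 (systematicCode A) = N :=
  ⟨h.isSelfDualCode, h.minWeightNine hN, h.ncard_wordsOfWeight (by norm_num)⟩

theorem Certificate.not_codeEquiv {A' : Matrix (Fin 18) (Fin 18) (ZMod 3)} {N' D' : ℕ}
    (h' : Certificate A' N' D') (hD : D ≠ D') :
    ¬ CodeEquiv (systematicCode A) (systematicCode A') := by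
  have hn : 18 + 18 < 63 := by norm_num
  intro hAA'
  apply hD
  calc D = (disjointPairs (systematicCode A) 9).ncard := (h.ncard_disjointPairs hn).symm
    _ = (disjointPairs (systematicCode A') 9).ncard := (hAA'.ncard_disjointPairs_eq 9).symm
    _ = D' := h'.ncard_disjointPairs hn

end LengthThirtySix

section Examples

/-- The `n × n` negacirculant matrix with first row `v`. -/
def negacirculant {n : ℕ} {R : Type*} [Neg R] (v : Fin n → R) : Matrix (Fin n) (Fin n) R :=
  of fun i j => if i ≤ j then v (j - i) else -v (j - i)

/-- The `k × k` block matrix whose `(a, b)` block is the negacirculant matrix with first row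
`v a b`. -/
def blockNegacirculant {k n : ℕ} {R : Type*} [Neg R] (v : Fin k → Fin k → Fin n → R) :
    Matrix (Fin (k * n)) (Fin (k * n)) R :=
  of fun i j => negacirculant (v i.divNat j.divNat) i.modNat j.modNat

/-- The vector of the six decimal digits of `d`, leading digit first. -/
def digits (d : ℕ) (t : Fin 6) : ZMod 3 :=
  (d / 10 ^ (5 - t : ℕ) % 10 : ℕ)

/-- The matrix of negacirculant blocks whose first rows are written as six-digit numbers. -/
def matrixOfDigits (B : Matrix (Fin 3) (Fin 3) ℕ) : Matrix (Fin 18) (Fin 18) (ZMod 3) :=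
  blockNegacirculant fun a b => digits (B a b)

/-- The first rows for the two codes with `104` words of weight `9`. -/
def blocks104 : Fin 2 → Matrix (Fin 3) (Fin 3) ℕ :=
  ![!![201211, 001122, 220211; 022110, 221202, 211012; 222021, 121220, 011110],
    !![021012, 112211, 110220; 122022, 100220, 122221; 010020, 111012, 212020]]

/-- The first rows for the seven codes with `120` words of weight `9`. -/
def blocks120 : Fin 7 → Matrix (Fin 3) (Fin 3) ℕ :=
  ![!![110111, 220100, 020101; 220002, 100221, 022110; 010022, 220120, 022201],
    !![022221, 121212, 200120; 210102, 021222, 121021; 221201, 020011, 100210],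
    !![112020, 210202, 012002; 112122, 202222, 220100; 000002, 120111, 220121],
    !![221012, 202210, 222202; 100002, 211121, 002012; 012220, 011021, 122121],
    !![211101, 012202, 102222; 110020, 210200, 211102; 111121, 210120, 020222],
    !![011020, 001110, 222012; 201202, 021020, 021101; 212020, 122202, 010001],
    !![202020, 211101, 100102; 211210, 212011, 110110; 102001, 001112, 220202]]

/-- The numbers of disjoint pairs of words of weight `9` in the codes given by `blocks104`. -/
def disjointPairCount104 : Fin 2 → ℕ :=
  ![2064, 1584]

/-- The numbers of disjoint pairs of words of weight `9` in the codes given by `blocks120`. -/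
def disjointPairCount120 : Fin 7 → ℕ :=
  ![2280, 2688, 2256, 2664, 2544, 2928, 2592]

theorem certificate104 (j : Fin 2) :
    Certificate (matrixOfDigits (blocks104 j)) 104 (disjointPairCount104 j) := by
  decide +revert +kernel

theorem certificate120 (j : Fin 7) :
    Certificate (matrixOfDigits (blocks120 j)) 120 (disjointPairCount120 j) := by
  decide +revert +kernel

end Examples

theorem inequivalent_near_extremal_codes :
    (∃ C₁ C₂ : Submodule (ZMod 3) (Fin 36 → ZMod 3),
      (IsSelfDualCode C₁ ∧ MinWeightNine C₁ ∧ A9 C₁ = 104) ∧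
      (IsSelfDualCode C₂ ∧ MinWeightNine C₂ ∧ A9 C₂ = 104) ∧
      ¬ CodeEquiv C₁ C₂) ∧
    (∃ C : Fin 7 → Submodule (ZMod 3) (Fin 36 → ZMod 3),
      (∀ j, IsSelfDualCode (C j) ∧ MinWeightNine (C j) ∧ A9 (C j) = 120) ∧
      ∀ j k, j ≠ k → ¬ CodeEquiv (C j) (C k)) := by
  refine ⟨⟨_, _, (certificate104 0).nearExtremal (by decide), (certificate104 1).nearExtremal
    (by decide), (certificate104 0).not_codeEquiv (certificate104 1) (by decide)⟩,
    fun j => systematicCode (matrixOfDigits (blocks120 j)), fun j => ?_, fun j k hjk => ?_⟩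
  · exact (certificate120 j).nearExtremal (by decide)
  · have injective : Function.Injective disjointPairCount120 := by decide
    exact (certificate120 j).not_codeEquiv (certificate120 k) (injective.ne hjk)
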